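/- arXiv:1303.5473 — 2 statements merged into one kernel-verified Lean document; each statement's English description precedes it below -/
import Mathlib

section
/- Let P be a finite set of points in the plane in general position. Then the θ₄-graph of P is a geometric spanner with stretch factor at most (1+√2)·(√2+36)·√(4+2√2) (≈ 237): for all points s, t ∈ P there exists a path from s to t in the θ₄-graph of P whose length is at most (1+√2)·(√2+36)·√(4+2√2)·‖s−t‖₂. -/
open scoped BigOperators

/-- Euclidean distance between two points of the plane. -/
noncomputable def dist2 (p q : ℝ × ℝ) : ℝ := Real.sqrt ((p.1 - q.1) ^ 2 + (p.2 - q.2) ^ 2)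

/-- `L₁` distance between two points of the plane. -/
def dist1 (p q : ℝ × ℝ) : ℝ := |p.1 - q.1| + |p.2 - q.2|

/-- `L∞` distance between two points of the plane (half the side of `S_t(s)`). -/
def distInf (p q : ℝ × ℝ) : ℝ := max |p.1 - q.1| |p.2 - q.2|

/-- `cone i p q` : the point `q` lies in the open cone (quadrant) `C_i(p)`. -/
def cone (i : ℕ) (p q : ℝ × ℝ) : Prop :=
  if i = 0 then p.1 < q.1 ∧ q.2 < p.2
  else if i = 1 then p.1 < q.1 ∧ p.2 < q.2
  else if i = 2 then q.1 < p.1 ∧ p.2 < q.2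
  else q.1 < p.1 ∧ q.2 < p.2

/-- General position: no two points of `P` on a common vertical line, horizontal line,
or line of slope `+1` or `-1`. -/
def GenPos (P : Finset (ℝ × ℝ)) : Prop :=
  ∀ p ∈ P, ∀ q ∈ P, p ≠ q →
    p.1 ≠ q.1 ∧ p.2 ≠ q.2 ∧ p.2 - p.1 ≠ q.2 - q.1 ∧ p.2 + p.1 ≠ q.2 + q.1

/-- `IsNbr P i p q` : `q = n_i(p)`, i.e. `q` is a point of `P` in `C_i(p)` minimizing
the `L₁`-distance to `p`. -/
def IsNbr (P : Finset (ℝ × ℝ)) (i : ℕ) (p q : ℝ × ℝ) : Prop :=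
  q ∈ P ∧ cone i p q ∧ ∀ r ∈ P, cone i p r → dist1 p q ≤ dist1 p r

/-- Adjacency in the θ₄-graph of `P`. -/
def Theta4Adj (P : Finset (ℝ × ℝ)) (p q : ℝ × ℝ) : Prop :=
  p ∈ P ∧ q ∈ P ∧ ∃ i < 4, (IsNbr P i p q ∨ IsNbr P i q p)

/-- A walk with `k` edges in the θ₄-graph of `P`, given by its vertices `v 0, …, v k`. -/
def IsTheta4Path (P : Finset (ℝ × ℝ)) (k : ℕ) (v : ℕ → ℝ × ℝ) : Prop :=
  v 0 ∈ P ∧ ∀ j < k, Theta4Adj P (v j) (v (j + 1))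

/-- The Euclidean length of a path with `k` edges. -/
noncomputable def pathLength (k : ℕ) (v : ℕ → ℝ × ℝ) : ℝ :=
  ∑ j ∈ Finset.range k, dist2 (v j) (v (j + 1))

/-- `p` is `t`-protected: no point of `P` lying in `C₁(p)` is on or below the line `ℓ⁻_t`
of slope `-1` through `t`. -/
def TProtected (P : Finset (ℝ × ℝ)) (t p : ℝ × ℝ) : Prop :=
  ∀ q ∈ P, cone 1 p q → t.1 + t.2 < q.1 + q.2

/-! ### Walks towards a fixed target -/

/-- There is a walk from `p` to `t` of Euclidean length at most `c`. -/
def Reach (P : Finset (ℝ × ℝ)) (t p : ℝ × ℝ) (c : ℝ) : Prop :=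
  ∃ (k : ℕ) (v : ℕ → ℝ × ℝ), IsTheta4Path P k v ∧ v 0 = p ∧ v k = t ∧ pathLength k v ≤ c

theorem Reach.mono {P : Finset (ℝ × ℝ)} {t p : ℝ × ℝ} {c d : ℝ} (h : Reach P t p c)
    (hcd : c ≤ d) : Reach P t p d := by
  obtain ⟨k, v, h1, h2, h3, h4⟩ := h
  exact ⟨k, v, h1, h2, h3, h4.trans hcd⟩

theorem Reach.refl {P : Finset (ℝ × ℝ)} {t : ℝ × ℝ} (ht : t ∈ P) : Reach P t t 0 :=
  ⟨0, fun _ => t, ⟨ht, fun j hj => absurd hj (Nat.not_lt_zero j)⟩, rfl, rfl, by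
    simp [pathLength]⟩

theorem dist2_le_dist1 (p q : ℝ × ℝ) : dist2 p q ≤ dist1 p q := by
  unfold dist2 dist1
  apply Real.sqrt_le_iff.2
  refine ⟨by positivity, ?_⟩
  rw [← sq_abs (p.1 - q.1), ← sq_abs (p.2 - q.2)]
  nlinarith [mul_nonneg (abs_nonneg (p.1 - q.1)) (abs_nonneg (p.2 - q.2))]

theorem distInf_le_dist2 (p q : ℝ × ℝ) : distInf p q ≤ dist2 p q := by
  unfold dist2 distInf
  apply max_le
  · apply Real.abs_le_sqrt; nlinarith [sq_nonneg (p.2 - q.2)]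
  · apply Real.abs_le_sqrt; nlinarith [sq_nonneg (p.1 - q.1)]

theorem Reach.cons {P : Finset (ℝ × ℝ)} {t p q : ℝ × ℝ} {c : ℝ} (ha : Theta4Adj P p q)
    (h : Reach P t q c) : Reach P t p (c + dist1 p q) := by
  obtain ⟨k, v, h1, h2, h3, h4⟩ := h
  refine ⟨k + 1, fun n => Nat.casesOn n p v, ⟨ha.1, ?_⟩, rfl, h3, ?_⟩
  · intro j hj
    cases j with
    | zero => simpa [h2] using ha
    | succ i => exact h1.2 i (by omega)
  · unfold pathLength at *
    rw [Finset.sum_range_succ']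
    have h5 := dist2_le_dist1 p q
    have h6 : dist2 p (v 0) ≤ dist1 p q := by rw [h2]; exact h5
    change ∑ j ∈ Finset.range k, dist2 (v j) (v (j + 1)) + dist2 p (v 0) ≤ _
    linarith

/-! ### Oriented coordinate frames centred at the target -/

/-- Coordinates `X, Y` centred at `t` in which the needed nearest-neighbour facts hold. -/
structure Frame (P : Finset (ℝ × ℝ)) (t : ℝ × ℝ) (X Y : ℝ × ℝ → ℝ) : Prop where
  d1 : ∀ p q, dist1 p q = |X p - X q| + |Y p - Y q|
  dI : ∀ p q, distInf p q = max |X p - X q| |Y p - Y q|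
  ht : t ∈ P
  hX : X t = 0
  hY : Y t = 0
  gx : ∀ p ∈ P, ∀ q ∈ P, X p = X q → p = q
  gy : ∀ p ∈ P, ∀ q ∈ P, Y p = Y q → p = q
  gd : ∀ p ∈ P, X p = Y p → p = t
  n11 : ∀ p ∈ P, ∀ r ∈ P, X p < X r → Y p < Y r → ∃ q ∈ P, X p < X q ∧ Y p < Y q ∧
    Theta4Adj P p q ∧ ∀ r ∈ P, X p < X r → Y p < Y r → X q + Y q ≤ X r + Y r
  n10 : ∀ p ∈ P, ∀ r ∈ P, X p < X r → Y r < Y p → ∃ q ∈ P, X p < X q ∧ Y q < Y p ∧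
    Theta4Adj P p q ∧ ∀ r ∈ P, X p < X r → Y r < Y p → X q - Y q ≤ X r - Y r
  n01 : ∀ p ∈ P, ∀ r ∈ P, Y p < Y r → X r < X p → ∃ q ∈ P, Y p < Y q ∧ X q < X p ∧
    Theta4Adj P p q ∧ ∀ r ∈ P, Y p < Y r → X r < X p → Y q - X q ≤ Y r - X r

theorem Frame.swap {P : Finset (ℝ × ℝ)} {t : ℝ × ℝ} {X Y : ℝ × ℝ → ℝ} (F : Frame P t X Y) :
    Frame P t Y X where
  d1 p q := by rw [F.d1, add_comm]
  dI p q := by rw [F.dI, max_comm]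
  ht := F.ht
  hX := F.hY
  hY := F.hX
  gx := F.gy
  gy := F.gx
  gd p hp h := F.gd p hp h.symm
  n11 p hp r hr h1 h2 := by
    obtain ⟨q, hq, a, b, c, d⟩ := F.n11 p hp r hr h2 h1
    exact ⟨q, hq, b, a, c, fun r hr h1 h2 => by linarith [d r hr h2 h1]⟩
  n10 := F.n01
  n01 := F.n10

theorem Frame.inf_left {P : Finset (ℝ × ℝ)} {t : ℝ × ℝ} {X Y : ℝ × ℝ → ℝ} (F : Frame P t X Y)
    {p : ℝ × ℝ} (h1 : X p < Y p) (h2 : Y p < 0) : distInf p t = -X p := by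
  rw [F.dI, F.hX, F.hY, sub_zero, sub_zero, abs_of_neg h2, abs_of_neg (h1.trans h2)]
  exact max_eq_left (by linarith)

theorem Frame.one_left {P : Finset (ℝ × ℝ)} {t : ℝ × ℝ} {X Y : ℝ × ℝ → ℝ} (F : Frame P t X Y)
    {p : ℝ × ℝ} (h1 : X p < 0) (h2 : Y p < 0) : dist1 p t = -X p - Y p := by
  rw [F.d1, F.hX, F.hY, sub_zero, sub_zero, abs_of_neg h2, abs_of_neg h1]
  ring

/-- `z` is saturated: nothing of the left region is below and to the right of `z`. -/
def Sat (P : Finset (ℝ × ℝ)) (X Y : ℝ × ℝ → ℝ) (z : ℝ × ℝ) : Prop :=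
  ∀ p ∈ P, X z < X p → Y p < Y z → X p < Y p → False

/-- Sweeping away from the axis until the vertex is saturated. -/
theorem sweep {P : Finset (ℝ × ℝ)} {t : ℝ × ℝ} {X Y : ℝ × ℝ → ℝ} (F : Frame P t X Y)
    (z : ℝ × ℝ) (hz : z ∈ P) (h1 : X z < Y z) :
    ∃ z0 ∈ P, X z0 < Y z0 ∧ Y z0 ≤ Y z ∧ X z ≤ X z0 ∧ Sat P X Y z0 ∧
      ∀ c, Reach P t z0 c → Reach P t z (c + (X z0 - X z + (Y z - Y z0))) := by
  induction' hn : (P.filter (fun p => X z < X p)).card using Nat.strong_induction_on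
    with n ih generalizing z
  by_cases hs : Sat P X Y z
  · exact ⟨z, hz, h1, le_rfl, le_rfl, hs, fun c hc => hc.mono (by linarith)⟩
  · unfold Sat at hs
    push Not at hs
    obtain ⟨p, hp, hp1, hp2, hp3, -⟩ := hs
    obtain ⟨q, hq, hq1, hq2, hadj, hmin⟩ := F.n10 z hz p hp hp1 hp2
    have hqp := hmin p hp hp1 hp2
    have hcard : (P.filter (fun p => X q < X p)).card < n := by
      rw [← hn]
      apply Finset.card_lt_card
      rw [Finset.ssubset_iff_of_subset]
      · exact ⟨q, by simp [hq, hq1], by simp⟩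
      · intro r hr
        simp only [Finset.mem_filter] at hr ⊢
        exact ⟨hr.1, hq1.trans hr.2⟩
    obtain ⟨z0, hz0, a, b, c, d, e⟩ := ih _ hcard q hq (by linarith) rfl
    refine ⟨z0, hz0, a, by linarith, by linarith, d, fun k hk => ((e k hk).cons hadj).mono ?_⟩
    rw [F.d1, abs_of_neg (by linarith), abs_of_pos (by linarith)]
    linarith

/-- `τ` bounds the `L₁` norm of all points of the octant `X < Y < 0` within `L∞` radius `r`. -/
def Valid (P : Finset (ℝ × ℝ)) (t : ℝ × ℝ) (X Y : ℝ × ℝ → ℝ) (r τ : ℝ) : Prop :=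
  0 ≤ τ ∧ ∀ p ∈ P, X p < Y p → Y p < 0 → distInf p t ≤ r → dist1 p t ≤ τ

theorem Valid.mono {P : Finset (ℝ × ℝ)} {t : ℝ × ℝ} {X Y : ℝ × ℝ → ℝ} {r r' τ : ℝ}
    (h : Valid P t X Y r τ) (hr : r' ≤ r) : Valid P t X Y r' τ :=
  ⟨h.1, fun p hp h1 h2 h3 => h.2 p hp h1 h2 (h3.trans hr)⟩

theorem distInf_nonneg (p q : ℝ × ℝ) : 0 ≤ distInf p q :=
  (abs_nonneg _).trans (le_max_left _ _)

theorem dist1_nonneg (p q : ℝ × ℝ) : 0 ≤ dist1 p q :=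
  add_nonneg (abs_nonneg _) (abs_nonneg _)

/-- From a saturated vertex the walk leaves its quadrant cheaply. -/
theorem exit_quadrant {P : Finset (ℝ × ℝ)} {t : ℝ × ℝ} (n : ℕ) :
    ∀ (X Y : ℝ × ℝ → ℝ), Frame P t X Y → ∀ z ∈ P, X z < Y z → Y z < 0 → Sat P X Y z →
    (P.filter (fun p => distInf p t < distInf z t)).card = n →
    ∀ τL τB, Valid P t X Y (distInf z t) τL → Valid P t Y X (distInf z t) τB →
    ∃ w ∈ P, ∃ re, distInf w t < re ∧ re ≤ -X z ∧
      (∀ c, Reach P t w c → Reach P t z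
        (c + (-X z - Y z + 2 * (-X z - re) + dist1 w t - 2 * distInf w t))) ∧
      ∃ τL' τB', Valid P t X Y (distInf w t) τL' ∧ Valid P t Y X (distInf w t) τB' ∧
        τL' + τB' ≤ τB + distInf w t := by
  induction' n using Nat.strong_induction_on with n ih
  intro X Y F z hz h1 h2 hs hn τL τB hL hB
  have hzI := F.inf_left h1 h2
  obtain ⟨q, hq, hq1, hq2, hadj, hmin⟩ :=
    F.n11 z hz t F.ht (by rw [F.hX]; linarith) (by rw [F.hY]; linarith)
  have hqt := hmin t F.ht (by rw [F.hX]; linarith) (by rw [F.hY]; linarith)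
  rw [F.hX, F.hY] at hqt
  have hd : dist1 z q = X q - X z + (Y q - Y z) := by
    rw [F.d1, abs_of_neg (by linarith), abs_of_neg (by linarith)]; ring
  by_cases hQ : X q < 0 ∧ Y q < 0
  · obtain ⟨hqX, hqY⟩ := hQ
    have hcard : ∀ z', distInf z' t < distInf z t → z' ∈ P →
        (P.filter (fun p => distInf p t < distInf z' t)).card < n := by
      intro z' hz' hz'P
      rw [← hn]
      apply Finset.card_lt_card
      rw [Finset.ssubset_iff_of_subset]
      · exact ⟨z', by simp [hz'P, hz'], by simp⟩
      · intro r hr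
        simp only [Finset.mem_filter] at hr ⊢
        exact ⟨hr.1, hr.2.trans hz'⟩
    rcases lt_trichotomy (X q) (Y q) with hc | hc | hc
    · obtain ⟨z', hz', a1, a2, a3, a4, a5⟩ := sweep F q hq hc
      have hI' := F.inf_left a1 (by linarith)
      have hY : Y z < Y z' := by
        rcases lt_trichotomy (Y z) (Y z') with h | h | h
        · exact h
        · have := F.gy z hz z' hz' h
          rw [this] at hq1
          linarith
        · exact (hs z' hz' (by linarith) h a1).elim
      have hsum := hmin z' hz' (by linarith) hY
      have hlt : distInf z' t < distInf z t := by rw [hzI, hI']; linarith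
      obtain ⟨w, hw, re, b1, b2, b3, b4⟩ := ih _ (hcard z' hlt hz') X Y F z' hz' a1
        (by linarith) a4 rfl τL τB (hL.mono hlt.le) (hB.mono hlt.le)
      refine ⟨w, hw, re, b1, by linarith, fun c hc => ((a5 _ (b3 c hc)).cons hadj).mono ?_, b4⟩
      rw [hd]
      linarith
    · have := F.gd q hq hc
      rw [this, F.hX] at hqX
      linarith
    · obtain ⟨z', hz', a1, a2, a3, a4, a5⟩ := sweep F.swap q hq hc
      have hI' := F.swap.inf_left a1 (by linarith)
      have hX : X z < X z' := by
        by_contra h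
        linarith
      have hsum := hmin z' hz' hX (by linarith)
      have hlt : distInf z' t < distInf z t := by rw [hzI, hI']; linarith
      have hqI := F.swap.inf_left hc hqX
      have hq1' := F.one_left hqX hqY
      have hqB : dist1 q t ≤ τB := hB.2 q hq hc hqX (by rw [hqI, hzI]; linarith)
      have hL' : Valid P t X Y (distInf z' t) (dist1 q t) := by
        refine ⟨dist1_nonneg _ _, fun p hp p1 p2 p3 => ?_⟩
        rw [F.inf_left p1 p2, hI'] at p3
        have := hmin p hp (by linarith) (by linarith)
        rw [F.one_left (by linarith) p2, hq1']
        linarith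
      obtain ⟨w, hw, re, b1, b2, b3, τB', τL', b4, b5, b6⟩ := ih _ (hcard z' hlt hz') Y X F.swap
        z' hz' a1 (by linarith) a4 rfl τB (dist1 q t) (hB.mono hlt.le) hL'
      refine ⟨w, hw, re, b1, by linarith,
        fun c hc => ((a5 _ (b3 c hc)).cons hadj).mono ?_, τL', τB', b5, b4, by linarith⟩
      rw [hd]
      linarith
  · have key : distInf q t < -X z ∧ dist1 q t - 2 * distInf q t = X q + Y q ∧
        -(X q + Y q) ≤ distInf q t := by
      rw [F.dI, F.d1, F.hX, F.hY, sub_zero, sub_zero]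
      by_cases hY : 0 ≤ Y q
      · rw [abs_of_nonneg hY, abs_of_nonpos (by linarith), max_eq_left (by linarith)]
        refine ⟨by linarith, by linarith, by linarith⟩
      · have hX : 0 ≤ X q := by
          by_contra h
          exact hQ ⟨by linarith, by linarith⟩
        rw [abs_of_nonneg hX, abs_of_nonpos (by linarith), max_eq_right (by linarith)]
        refine ⟨by linarith, by linarith, by linarith⟩
    obtain ⟨k1, k2, k3⟩ := key
    refine ⟨q, hq, -X z, k1, le_rfl, fun c hc => (hc.cons hadj).mono ?_, distInf q t, τB, ?_,
      hB.mono (by rw [hzI]; exact k1.le), by linarith⟩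
    · rw [hd]; linarith
    · refine ⟨distInf_nonneg _ _, fun p hp p1 p2 p3 => ?_⟩
      rw [F.inf_left p1 p2] at p3
      have hX : X z < X p := by linarith
      have hY : Y z < Y p := by
        rcases lt_trichotomy (Y z) (Y p) with h | h | h
        · exact h
        · have := F.gy z hz p hp h
          rw [this] at hX
          linarith
        · exact (hs p hp hX h p1).elim
      have := hmin p hp hX hY
      rw [F.one_left (by linarith) p2]
      linarith

/-! ### The eight orientations -/

/-- A sign. -/
def sg (a : Bool) : ℝ := if a then 1 else -1

/-- First coordinate of the orientation `e`. -/
def cX (t : ℝ × ℝ) (e : Bool × Bool × Bool) (p : ℝ × ℝ) : ℝ :=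
  if e.2.2 then sg e.2.1 * (p.2 - t.2) else sg e.1 * (p.1 - t.1)

/-- Second coordinate of the orientation `e`. -/
def cY (t : ℝ × ℝ) (e : Bool × Bool × Bool) (p : ℝ × ℝ) : ℝ :=
  if e.2.2 then sg e.1 * (p.1 - t.1) else sg e.2.1 * (p.2 - t.2)

theorem nearest {P : Finset (ℝ × ℝ)} (a b : Bool) (p : ℝ × ℝ) (hp : p ∈ P) (r : ℝ × ℝ)
    (hr : r ∈ P) (h1 : sg a * p.1 < sg a * r.1) (h2 : sg b * p.2 < sg b * r.2) :
    ∃ q ∈ P, sg a * p.1 < sg a * q.1 ∧ sg b * p.2 < sg b * q.2 ∧ Theta4Adj P p q ∧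
      ∀ r ∈ P, sg a * p.1 < sg a * r.1 → sg b * p.2 < sg b * r.2 →
        sg a * q.1 + sg b * q.2 ≤ sg a * r.1 + sg b * r.2 := by
  obtain ⟨q, hq, hmin⟩ := Finset.exists_min_image
    (P.filter (fun r => sg a * p.1 < sg a * r.1 ∧ sg b * p.2 < sg b * r.2))
    (fun r => sg a * r.1 + sg b * r.2) ⟨r, by simp [hr, h1, h2]⟩
  simp only [Finset.mem_filter] at hq hmin
  obtain ⟨hqP, hq1, hq2⟩ := hq
  have hmin' : ∀ r ∈ P, sg a * p.1 < sg a * r.1 → sg b * p.2 < sg b * r.2 →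
      sg a * q.1 + sg b * q.2 ≤ sg a * r.1 + sg b * r.2 :=
    fun r hr h1 h2 => hmin r ⟨hr, h1, h2⟩
  refine ⟨q, hqP, hq1, hq2, ⟨hp, hqP, ?_⟩, hmin'⟩
  have hd : ∀ r : ℝ × ℝ, sg a * p.1 < sg a * r.1 → sg b * p.2 < sg b * r.2 →
      dist1 p r = sg a * r.1 - sg a * p.1 + (sg b * r.2 - sg b * p.2) := by
    intro r h1 h2
    unfold dist1
    have e1 : |p.1 - r.1| = sg a * r.1 - sg a * p.1 := by
      cases a <;> simp only [sg, Bool.false_eq_true, if_true, if_false] at *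
      · rw [abs_of_pos (by linarith)]; ring
      · rw [abs_of_neg (by linarith)]; ring
    have e2 : |p.2 - r.2| = sg b * r.2 - sg b * p.2 := by
      cases b <;> simp only [sg, Bool.false_eq_true, if_true, if_false] at *
      · rw [abs_of_pos (by linarith)]; ring
      · rw [abs_of_neg (by linarith)]; ring
    rw [e1, e2]
  obtain ⟨i, hi, hcone⟩ : ∃ i < 4, ∀ r : ℝ × ℝ,
      cone i p r ↔ (sg a * p.1 < sg a * r.1 ∧ sg b * p.2 < sg b * r.2) := by
    cases a <;> cases b
    · exact ⟨3, by norm_num, fun r => by simp [cone, sg]⟩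
    · exact ⟨2, by norm_num, fun r => by simp [cone, sg]⟩
    · exact ⟨0, by norm_num, fun r => by simp [cone, sg]⟩
    · exact ⟨1, by norm_num, fun r => by simp [cone, sg]⟩
  refine ⟨i, hi, Or.inl ⟨hqP, (hcone q).2 ⟨hq1, hq2⟩, fun r hr hc => ?_⟩⟩
  obtain ⟨h1, h2⟩ := (hcone r).1 hc
  rw [hd q hq1 hq2, hd r h1 h2]
  linarith [hmin' r hr h1 h2]

theorem sg_not (a : Bool) : sg (!a) = -sg a := by cases a <;> simp [sg]

theorem sg_abs (a : Bool) (x y z : ℝ) : |sg a * (x - z) - sg a * (y - z)| = |x - y| := by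
  have : sg a * (x - z) - sg a * (y - z) = sg a * (x - y) := by ring
  rw [this, abs_mul]
  cases a <;> simp [sg]

theorem sg_inj (a : Bool) {x y z : ℝ} (h : sg a * (x - z) = sg a * (y - z)) : x = y := by
  cases a <;> simp [sg] at h <;> exact h

theorem frame_false {P : Finset (ℝ × ℝ)} (hP : GenPos P) {t : ℝ × ℝ} (ht : t ∈ P) (a b : Bool) :
    Frame P t (fun p => sg a * (p.1 - t.1)) (fun p => sg b * (p.2 - t.2)) where
  d1 p q := by simp only [sg_abs]; rfl
  dI p q := by simp only [sg_abs]; rfl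
  ht := ht
  hX := by simp
  hY := by simp
  gx p hp q hq h := by
    by_contra hne
    exact (hP p hp q hq hne).1 (sg_inj a h)
  gy p hp q hq h := by
    by_contra hne
    exact (hP p hp q hq hne).2.1 (sg_inj b h)
  gd p hp h := by
    by_contra hne
    obtain ⟨-, -, h3, h4⟩ := hP p hp t ht hne
    cases a <;> cases b <;> simp only [sg, Bool.false_eq_true, if_true, if_false] at h
    · exact h3 (by linarith)
    · exact h4 (by linarith)
    · exact h4 (by linarith)
    · exact h3 (by linarith)
  n11 p hp r hr h1 h2 := by
    obtain ⟨q, hq, q1, q2, q3, q4⟩ := nearest a b p hp r hr (by linarith) (by linarith)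
    exact ⟨q, hq, by linarith, by linarith, q3, fun r hr h1 h2 => by
      linarith [q4 r hr (by linarith) (by linarith)]⟩
  n10 p hp r hr h1 h2 := by
    obtain ⟨q, hq, q1, q2, q3, q4⟩ := nearest a (!b) p hp r hr (by linarith)
      (by rw [sg_not]; linarith)
    rw [sg_not] at *
    exact ⟨q, hq, by linarith, by linarith, q3, fun r hr h1 h2 => by
      linarith [q4 r hr (by linarith) (by linarith)]⟩
  n01 p hp r hr h1 h2 := by
    obtain ⟨q, hq, q1, q2, q3, q4⟩ := nearest (!a) b p hp r hr
      (by rw [sg_not]; linarith) (by linarith)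
    rw [sg_not] at *
    exact ⟨q, hq, by linarith, by linarith, q3, fun r hr h1 h2 => by
      linarith [q4 r hr (by linarith) (by linarith)]⟩

theorem frame_all {P : Finset (ℝ × ℝ)} (hP : GenPos P) {t : ℝ × ℝ} (ht : t ∈ P)
    (e : Bool × Bool × Bool) : Frame P t (cX t e) (cY t e) := by
  obtain ⟨a, b, c⟩ := e
  cases c
  · exact frame_false hP ht a b
  · exact (frame_false hP ht a b).swap

/-- The other octant in the same quadrant. -/
def flip3 (e : Bool × Bool × Bool) : Bool × Bool × Bool := (e.1, e.2.1, !e.2.2)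

theorem cX_flip (t : ℝ × ℝ) (e : Bool × Bool × Bool) : cX t (flip3 e) = cY t e := by
  obtain ⟨a, b, c⟩ := e
  cases c <;> rfl

theorem cY_flip (t : ℝ × ℝ) (e : Bool × Bool × Bool) : cY t (flip3 e) = cX t e := by
  obtain ⟨a, b, c⟩ := e
  cases c <;> rfl

theorem exists_octant {P : Finset (ℝ × ℝ)} (hP : GenPos P) {t : ℝ × ℝ} (ht : t ∈ P)
    {w : ℝ × ℝ} (hw : w ∈ P) (hne : w ≠ t) : ∃ e, cX t e w < cY t e w ∧ cY t e w < 0 := by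
  obtain ⟨h1, h2, -, -⟩ := hP w hw t ht hne
  obtain ⟨a, ha⟩ : ∃ a, sg a * (w.1 - t.1) < 0 := by
    rcases lt_or_gt_of_ne h1 with h | h
    · exact ⟨true, by simp [sg]; exact h⟩
    · exact ⟨false, by simp [sg]; exact h⟩
  obtain ⟨b, hb⟩ : ∃ b, sg b * (w.2 - t.2) < 0 := by
    rcases lt_or_gt_of_ne h2 with h | h
    · exact ⟨true, by simp [sg]; exact h⟩
    · exact ⟨false, by simp [sg]; exact h⟩
  rcases lt_trichotomy (sg a * (w.1 - t.1)) (sg b * (w.2 - t.2)) with h | h | h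
  · exact ⟨(a, b, false), by simpa [cX, cY] using h, by simpa [cY] using hb⟩
  · exact (hne ((frame_false hP ht a b).gd w hw h)).elim
  · exact ⟨(a, b, true), by simpa [cX, cY] using h, by simpa [cY] using ha⟩

theorem sum_replace (τ : Bool × Bool × Bool → ℝ) (e : Bool × Bool × Bool) (x y : ℝ) :
    ∑ i, (if i = e then x else if i = flip3 e then y else τ i) =
      ∑ i, τ i + (x + y) - (τ e + τ (flip3 e)) := by
  obtain ⟨a, b, c⟩ := e
  cases a <;> cases b <;> cases c <;> simp [flip3, Fintype.sum_prod_type] <;> ring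

/-- The main potential argument. -/
theorem main_reach {P : Finset (ℝ × ℝ)} (hP : GenPos P) {t : ℝ × ℝ} (ht : t ∈ P) (n : ℕ) :
    ∀ w ∈ P, (P.filter (fun p => distInf p t < distInf w t)).card = n →
    ∀ τ : Bool × Bool × Bool → ℝ,
      (∀ e, Valid P t (cX t e) (cY t e) (distInf w t) (τ e)) →
      Reach P t w (4 * distInf w t - dist1 w t + 2 * ∑ e, τ e) := by
  induction' n using Nat.strong_induction_on with n ih
  intro w hw hn τ hτ
  by_cases hwt : w = t
  · subst hwt
    refine (Reach.refl ht).mono ?_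
    have h0 : 0 ≤ ∑ e, τ e := Finset.sum_nonneg fun e _ => (hτ e).1
    have h1 : distInf w w = 0 := by simp [distInf]
    have h2 : dist1 w w = 0 := by simp [dist1]
    rw [h1, h2]
    linarith
  obtain ⟨e, he1, he2⟩ := exists_octant hP ht hw hwt
  have F := frame_all hP ht e
  obtain ⟨z, hz, a1, a2, a3, a4, a5⟩ := sweep F w hw he1
  have hzY : cY t e z < 0 := by linarith
  have hwI := F.inf_left he1 he2
  have hzI := F.inf_left a1 hzY
  have hw1 := F.one_left (he1.trans he2) he2
  have hz1 := F.one_left (a1.trans hzY) hzY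
  have hle : distInf z t ≤ distInf w t := by rw [hwI, hzI]; linarith
  have hB : Valid P t (cY t e) (cX t e) (distInf w t) (τ (flip3 e)) := by
    have := hτ (flip3 e)
    rwa [cX_flip, cY_flip] at this
  obtain ⟨v, hv, re, b1, b2, b3, τL, τB, b4, b5, b6⟩ := exit_quadrant _ (cX t e) (cY t e) F z hz
    a1 hzY a4 rfl (τ e) (τ (flip3 e)) ((hτ e).mono hle) (hB.mono hle)
  have hlt : distInf v t < distInf w t := by rw [hwI]; linarith
  have hcard : (P.filter (fun p => distInf p t < distInf v t)).card < n := by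
    rw [← hn]
    apply Finset.card_lt_card
    rw [Finset.ssubset_iff_of_subset]
    · exact ⟨v, by simp [hv, hlt], by simp⟩
    · intro r hr
      simp only [Finset.mem_filter] at hr ⊢
      exact ⟨hr.1, hr.2.trans hlt⟩
  have hrec := ih _ hcard v hv rfl
    (fun i => if i = e then τL else if i = flip3 e then τB else τ i) (by
      intro i
      by_cases h1 : i = e
      · subst h1; simpa using b4
      · by_cases h2 : i = flip3 e
        · subst h2
          simp only [h1, if_false, if_true]
          rw [cX_flip, cY_flip]
          exact b5
        · simp only [h1, h2, if_false]
          exact (hτ i).mono hlt.le)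
  rw [sum_replace] at hrec
  refine (a5 _ (b3 _ hrec)).mono ?_
  have hzτ := (hτ e).2 z hz a1 hzY hle
  linarith

/-- The θ₄-graph of a finite point set in general position is a spanner with stretch factor
at most `(1+√2)·(√2+36)·√(4+2√2)`. -/
theorem theta4_is_spanner (P : Finset (ℝ × ℝ)) (hP : GenPos P) :
    ∀ s ∈ P, ∀ t ∈ P, ∃ (k : ℕ) (v : ℕ → ℝ × ℝ),
      IsTheta4Path P k v ∧ v 0 = s ∧ v k = t ∧
      pathLength k v ≤
        (1 + Real.sqrt 2) * (Real.sqrt 2 + 36) * Real.sqrt (4 + 2 * Real.sqrt 2) *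
          dist2 s t := by
  intro s hs t ht
  have h := main_reach hP ht _ s hs rfl (fun _ => 2 * distInf s t) (by
    intro e
    refine ⟨by linarith [distInf_nonneg s t], fun p _ _ _ hp => ?_⟩
    have h1 : |p.1 - t.1| ≤ distInf p t := le_max_left _ _
    have h2 : |p.2 - t.2| ≤ distInf p t := le_max_right _ _
    unfold dist1
    linarith)
  refine h.mono ?_
  have h0 := distInf_nonneg s t
  have h1 : distInf s t ≤ dist1 s t := by
    have ha := abs_nonneg (s.1 - t.1)
    have hb := abs_nonneg (s.2 - t.2)
    unfold distInf dist1
    exact max_le (by linarith) (by linarith)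
  have h2 := distInf_le_dist2 s t
  have hs1 : 1 ≤ Real.sqrt 2 := Real.one_le_sqrt.2 (by norm_num)
  have hs2 : 1 ≤ Real.sqrt (4 + 2 * Real.sqrt 2) := Real.one_le_sqrt.2 (by linarith)
  have hc1 : (74 : ℝ) ≤ (1 + Real.sqrt 2) * (Real.sqrt 2 + 36) := by nlinarith
  have hc2 : (74 : ℝ) ≤
      (1 + Real.sqrt 2) * (Real.sqrt 2 + 36) * Real.sqrt (4 + 2 * Real.sqrt 2) := by nlinarith
  have hc3 : 74 * dist2 s t ≤
      (1 + Real.sqrt 2) * (Real.sqrt 2 + 36) * Real.sqrt (4 + 2 * Real.sqrt 2) * dist2 s t :=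
    mul_le_mul_of_nonneg_right hc2 (h0.trans h2)
  have hsum : ∑ _e : Bool × Bool × Bool, 2 * distInf s t = 16 * distInf s t := by
    simp; ring
  rw [hsum]
  linarith
end

section
/- The stretch factor of the θ₄-graph is at least 7: for every ε > 0 there exist a finite set P of points in the plane in general position and two points u, w ∈ P such that every path from u to w in the θ₄-graph of P has length at least (7 − ε)·‖u−w‖₂. -/
open scoped BigOperators

/-- Base abscissae of the 24 points. -/
def bX : Fin 24 → ℤ := ![0, 0, -1, 1, 1, -1, -2, 2, 1, -1, 2, -2, -2, 2, -2, 2, -3, 3, 3, -3, -1, 1, -1, 1]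
/-- Base ordinates of the 24 points. -/
def bY : Fin 24 → ℤ := ![0, 1, -1, 2, 0, 1, 0, 1, -1, 2, 2, -1, 2, -1, 0, 1, 1, 0, 1, 0, 1, 0, 2, -1]
/-- Perturbations of the abscissae. -/
def qX : Fin 24 → ℤ := ![-16, 16, -92, 92, 104, -104, -72, 72, -58, 58, 11, -11, -117, 117, -166, 166, -155, 155, 150, -150, 101, -101, -153, 153]
/-- Perturbations of the ordinates. -/
def qY : Fin 24 → ℤ := ![-138, 138, -200, 200, -132, 132, -195, 195, -143, 143, 177, -177, 132, -132, -128, 128, 2, -2, 78, -78, 191, -191, 66, -66]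
/-- Potential: a lower bound for the (scaled) distance to the point with index 0. -/
def pot : Fin 24 → ℤ := ![0, 7, 4, 3, 1, 6, 2, 5, 2, 5, 4, 3, 4, 3, 2, 5, 4, 3, 4, 3, 6, 1, 5, 2]

/-- Abscissa at scale `100000`. -/
def zX (a : Fin 24) : ℤ := bX a * 100000 + qX a
/-- Ordinate at scale `100000`. -/
def zY (a : Fin 24) : ℤ := bY a * 100000 + qY a

/-- Horizontal sign of cone `i`. -/
def sX : Fin 4 → ℤ := ![1, 1, -1, -1]
/-- Vertical sign of cone `i`. -/
def sY : Fin 4 → ℤ := ![-1, 1, 1, -1]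

/-- Integer version of the cones. -/
def coneZ (i : Fin 4) (a b : Fin 24) : Prop :=
  0 < sX i * (zX b - zX a) ∧ 0 < sY i * (zY b - zY a)

instance (i : Fin 4) (a b : Fin 24) : Decidable (coneZ i a b) := by
  unfold coneZ; infer_instance

/-- Signed `L₁` length. -/
def lenZ (i : Fin 4) (a b : Fin 24) : ℤ :=
  sX i * (zX b - zX a) + sY i * (zY b - zY a)

/-- The potential is 1-Lipschitz along the pair. -/
def good (a b : Fin 24) : Prop :=
  (pot a - pot b) ^ 2 ≤ (bX a - bX b) ^ 2 + (bY a - bY b) ^ 2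

instance (a b : Fin 24) : Decidable (good a b) := by
  unfold good; infer_instance

theorem good_or_blocked : ∀ a b : Fin 24, good a b ∨
    ∀ i : Fin 4, coneZ i a b → ∃ c, coneZ i a c ∧ lenZ i a c < lenZ i a b := by
  decide +kernel

theorem genposZ : ∀ a b : Fin 24, a ≠ b →
    zX a - zX b ≠ 0 ∧ zY a - zY b ≠ 0 ∧ (zY a - zX a) - (zY b - zX b) ≠ 0 ∧
      (zY a + zX a) - (zY b + zX b) ≠ 0 := by
  decide +kernel

theorem q_bound : ∀ a : Fin 24, |qX a| ≤ 200 ∧ |qY a| ≤ 200 := by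
  decide +kernel

/-- The points at scale `N`. -/
noncomputable def pt (N : ℝ) (a : Fin 24) : ℝ × ℝ :=
  ((bX a : ℝ) * N + qX a, (bY a : ℝ) * N + qY a)

theorem pos_iff (N : ℝ) (hN : 100000 ≤ N) (b p : ℤ) (hp : |p| < 100000) :
    0 < (b : ℝ) * N + p ↔ 0 < b * 100000 + p := by
  rw [abs_lt] at hp
  constructor
  · intro h
    by_contra hc
    have hb : b ≤ 0 := by omega
    have hb' : (b : ℝ) ≤ 0 := by exact_mod_cast hb
    have hc' : (b : ℝ) * 100000 + p ≤ 0 := by exact_mod_cast not_lt.mp hc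
    nlinarith
  · intro h
    have hb : 0 ≤ b := by omega
    have hb' : (0 : ℝ) ≤ b := by exact_mod_cast hb
    have hc' : (0 : ℝ) < (b : ℝ) * 100000 + p := by exact_mod_cast h
    nlinarith

theorem ne_zero_real (N : ℝ) (hN : 100000 ≤ N) (b p : ℤ) (hp : |p| < 100000)
    (h : b * 100000 + p ≠ 0) : (b : ℝ) * N + p ≠ 0 := by
  rcases lt_or_gt_of_ne h with h | h
  · have := (pos_iff N hN (-b) (-p) (by rwa [abs_neg])).2 (by omega)
    push_cast at this
    intro h0
    linarith
  · exact ((pos_iff N hN b p hp).2 h).ne'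

theorem sX_cases (i : Fin 4) : sX i = 1 ∨ sX i = -1 := by
  revert i; decide

theorem sY_cases (i : Fin 4) : sY i = 1 ∨ sY i = -1 := by
  revert i; decide

theorem sgnX (N : ℝ) (hN : 100000 ≤ N) (i : Fin 4) (a b : Fin 24) :
    0 < (sX i : ℝ) * ((pt N b).1 - (pt N a).1) ↔ 0 < sX i * (zX b - zX a) := by
  have ha := abs_le.mp (q_bound a).1
  have hb := abs_le.mp (q_bound b).1
  have hs := sX_cases i
  have key := pos_iff N hN (sX i * (bX b - bX a)) (sX i * (qX b - qX a)) (by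
    rw [abs_lt]; rcases hs with h | h <;> rw [h] <;> constructor <;> omega)
  have e1 : (sX i : ℝ) * ((pt N b).1 - (pt N a).1) =
      ((sX i * (bX b - bX a) : ℤ) : ℝ) * N + ((sX i * (qX b - qX a) : ℤ) : ℝ) := by
    simp only [pt]; push_cast; ring
  have e2 : sX i * (zX b - zX a) =
      sX i * (bX b - bX a) * 100000 + sX i * (qX b - qX a) := by
    simp only [zX]; ring
  rw [e1, e2, key]

theorem sgnY (N : ℝ) (hN : 100000 ≤ N) (i : Fin 4) (a b : Fin 24) :
    0 < (sY i : ℝ) * ((pt N b).2 - (pt N a).2) ↔ 0 < sY i * (zY b - zY a) := by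
  have ha := abs_le.mp (q_bound a).2
  have hb := abs_le.mp (q_bound b).2
  have hs := sY_cases i
  have key := pos_iff N hN (sY i * (bY b - bY a)) (sY i * (qY b - qY a)) (by
    rw [abs_lt]; rcases hs with h | h <;> rw [h] <;> constructor <;> omega)
  have e1 : (sY i : ℝ) * ((pt N b).2 - (pt N a).2) =
      ((sY i * (bY b - bY a) : ℤ) : ℝ) * N + ((sY i * (qY b - qY a) : ℤ) : ℝ) := by
    simp only [pt]; push_cast; ring
  have e2 : sY i * (zY b - zY a) =
      sY i * (bY b - bY a) * 100000 + sY i * (qY b - qY a) := by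
    simp only [zY]; ring
  rw [e1, e2, key]

theorem cone_sign (i : Fin 4) (p q : ℝ × ℝ) :
    cone (i : ℕ) p q ↔ 0 < (sX i : ℝ) * (q.1 - p.1) ∧ 0 < (sY i : ℝ) * (q.2 - p.2) := by
  fin_cases i <;> simp [cone, sX, sY]

theorem cone_iff (N : ℝ) (hN : 100000 ≤ N) (i : Fin 4) (a b : Fin 24) :
    cone (i : ℕ) (pt N a) (pt N b) ↔ coneZ i a b := by
  rw [cone_sign, sgnX N hN, sgnY N hN, coneZ]

theorem abs_sign (s : ℤ) (hs : s = 1 ∨ s = -1) (x y : ℝ) (h : 0 < (s : ℝ) * (y - x)) :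
    |x - y| = (s : ℝ) * (y - x) := by
  rcases hs with rfl | rfl
  · push_cast at *
    rw [abs_of_neg (by linarith)]; ring
  · push_cast at *
    rw [abs_of_pos (by linarith)]; ring

theorem dist1_cone (i : Fin 4) (p q : ℝ × ℝ) (h : cone (i : ℕ) p q) :
    dist1 p q = (sX i : ℝ) * (q.1 - p.1) + (sY i : ℝ) * (q.2 - p.2) := by
  rw [cone_sign] at h
  rw [dist1, abs_sign _ (sX_cases i) _ _ h.1, abs_sign _ (sY_cases i) _ _ h.2]

theorem dist1_lt (N : ℝ) (hN : 100000 ≤ N) (i : Fin 4) (a b c : Fin 24)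
    (hb : coneZ i a b) (hc : coneZ i a c) (h : lenZ i a c < lenZ i a b) :
    dist1 (pt N a) (pt N c) < dist1 (pt N a) (pt N b) := by
  rw [dist1_cone i _ _ ((cone_iff N hN i a b).2 hb), dist1_cone i _ _ ((cone_iff N hN i a c).2 hc)]
  have hb1 := abs_le.mp (q_bound b).1
  have hc1 := abs_le.mp (q_bound c).1
  have hb2 := abs_le.mp (q_bound b).2
  have hc2 := abs_le.mp (q_bound c).2
  have key := pos_iff N hN (sX i * (bX b - bX c) + sY i * (bY b - bY c))
    (sX i * (qX b - qX c) + sY i * (qY b - qY c)) (by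
      rw [abs_lt]
      rcases sX_cases i with h | h <;> rcases sY_cases i with h' | h' <;> rw [h, h'] <;>
        constructor <;> omega)
  have h2 := key.2 (by
    have e : (sX i * (bX b - bX c) + sY i * (bY b - bY c)) * 100000 +
      (sX i * (qX b - qX c) + sY i * (qY b - qY c)) = lenZ i a b - lenZ i a c := by
        simp only [lenZ, zX, zY]; ring
    rw [e]; omega)
  push_cast at h2
  simp only [pt]
  nlinarith

/-- The point set. -/
noncomputable def ptSet (N : ℝ) : Finset (ℝ × ℝ) :=
  letI := Classical.decEq (ℝ × ℝ)
  Finset.univ.image (pt N)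

theorem mem_ptSet (N : ℝ) (p : ℝ × ℝ) : p ∈ ptSet N ↔ ∃ a, pt N a = p := by
  simp [ptSet]

theorem nbr_good (N : ℝ) (hN : 100000 ≤ N) (i : ℕ) (hi : i < 4) (a b : Fin 24)
    (h : IsNbr (ptSet N) i (pt N a) (pt N b)) : good a b := by
  obtain ⟨-, hc, hmin⟩ := h
  rcases good_or_blocked a b with hg | hg
  · exact hg
  · exfalso
    have hc' := (cone_iff N hN ⟨i, hi⟩ a b).1 hc
    obtain ⟨c, hcc, hl⟩ := hg ⟨i, hi⟩ hc'
    have h1 := hmin (pt N c) ((mem_ptSet N _).2 ⟨c, rfl⟩) ((cone_iff N hN ⟨i, hi⟩ a c).2 hcc)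
    have h2 := dist1_lt N hN ⟨i, hi⟩ a b c hc' hcc hl
    linarith

theorem good_symm (a b : Fin 24) (h : good a b) : good b a := by
  unfold good at *; nlinarith

theorem adj_good (N : ℝ) (hN : 100000 ≤ N) (a b : Fin 24)
    (h : Theta4Adj (ptSet N) (pt N a) (pt N b)) : good a b := by
  obtain ⟨-, -, i, hi, h | h⟩ := h
  · exact nbr_good N hN i hi a b h
  · exact good_symm _ _ (nbr_good N hN i hi b a h)

theorem coord_sq (N : ℝ) (hN : 100000 ≤ N) (b p : ℤ) (hp : |p| ≤ 400) :
    ((N - 400) * b) ^ 2 ≤ ((b : ℝ) * N + p) ^ 2 := by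
  rw [abs_le] at hp
  have h1 : (-400 : ℝ) ≤ p := by exact_mod_cast hp.1
  have h2 : (p : ℝ) ≤ 400 := by exact_mod_cast hp.2
  rcases lt_trichotomy b 0 with h | h | h
  · have hb : (b : ℝ) ≤ -1 := by exact_mod_cast (by omega : b ≤ -1)
    rw [sq_le_sq, abs_of_nonpos (by nlinarith), abs_of_nonpos (by nlinarith)]
    nlinarith
  · subst h
    simpa using sq_nonneg (p : ℝ)
  · have hb : (1 : ℝ) ≤ b := by exact_mod_cast (by omega : 1 ≤ b)
    rw [sq_le_sq, abs_of_nonneg (by nlinarith), abs_of_nonneg (by nlinarith)]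
    nlinarith

theorem edge_len (N : ℝ) (hN : 100000 ≤ N) (a b : Fin 24) (h : good a b) :
    (N - 400) * ((pot b : ℝ) - pot a) ≤ dist2 (pt N a) (pt N b) := by
  have ha1 := abs_le.mp (q_bound a).1
  have hb1 := abs_le.mp (q_bound b).1
  have ha2 := abs_le.mp (q_bound a).2
  have hb2 := abs_le.mp (q_bound b).2
  have k1 := coord_sq N hN (bX a - bX b) (qX a - qX b) (by rw [abs_le]; constructor <;> omega)
  have k2 := coord_sq N hN (bY a - bY b) (qY a - qY b) (by rw [abs_le]; constructor <;> omega)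
  have hg : ((pot a : ℝ) - pot b) ^ 2 ≤
      ((bX a : ℝ) - bX b) ^ 2 + ((bY a : ℝ) - bY b) ^ 2 := by exact_mod_cast h
  apply Real.le_sqrt_of_sq_le
  push_cast at k1 k2
  have hm := mul_le_mul_of_nonneg_left hg (sq_nonneg (N - 400))
  simp only [pt]
  nlinarith

theorem genpos_pt (N : ℝ) (hN : 100000 ≤ N) (a b : Fin 24) (hab : a ≠ b) :
    (pt N a).1 ≠ (pt N b).1 ∧ (pt N a).2 ≠ (pt N b).2 ∧
      (pt N a).2 - (pt N a).1 ≠ (pt N b).2 - (pt N b).1 ∧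
      (pt N a).2 + (pt N a).1 ≠ (pt N b).2 + (pt N b).1 := by
  have ha1 := abs_le.mp (q_bound a).1
  have hb1 := abs_le.mp (q_bound b).1
  have ha2 := abs_le.mp (q_bound a).2
  have hb2 := abs_le.mp (q_bound b).2
  obtain ⟨h1, h2, h3, h4⟩ := genposZ a b hab
  simp only [zX, zY] at h1 h2 h3 h4
  have k1 := ne_zero_real N hN (bX a - bX b) (qX a - qX b)
    (by rw [abs_lt]; constructor <;> omega) (by omega)
  have k2 := ne_zero_real N hN (bY a - bY b) (qY a - qY b)
    (by rw [abs_lt]; constructor <;> omega) (by omega)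
  have k3 := ne_zero_real N hN ((bY a - bX a) - (bY b - bX b)) ((qY a - qX a) - (qY b - qX b))
    (by rw [abs_lt]; constructor <;> omega) (by omega)
  have k4 := ne_zero_real N hN ((bY a + bX a) - (bY b + bX b)) ((qY a + qX a) - (qY b + qX b))
    (by rw [abs_lt]; constructor <;> omega) (by omega)
  push_cast at k1 k2 k3 k4
  simp only [pt]
  refine ⟨fun h => k1 ?_, fun h => k2 ?_, fun h => k3 ?_, fun h => k4 ?_⟩ <;> linarith

theorem path_len (N : ℝ) (hN : 100000 ≤ N) (v : ℕ → ℝ × ℝ) (a : Fin 24) (h0 : v 0 = pt N a) :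
    ∀ (k : ℕ) (b : Fin 24), IsTheta4Path (ptSet N) k v → v k = pt N b →
      (N - 400) * ((pot b : ℝ) - pot a) ≤ pathLength k v := by
  intro k
  induction k with
  | zero =>
    intro b _ hb
    have hab : a = b := by
      by_contra hne
      exact (genpos_pt N hN a b hne).1 (by rw [← h0, ← hb])
    subst hab
    simp [pathLength]
  | succ k ih =>
    intro b hp hb
    have hadj := hp.2 k (Nat.lt_succ_self k)
    obtain ⟨c, hc⟩ := (mem_ptSet N _).1 hadj.1
    have h1 := ih c ⟨hp.1, fun j hj => hp.2 j (Nat.lt_succ_of_lt hj)⟩ hc.symm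
    rw [hb, ← hc] at hadj
    have h2 := edge_len N hN c b (adj_good N hN c b hadj)
    rw [pathLength, Finset.sum_range_succ, hb, ← hc]
    rw [pathLength] at h1
    linarith

/-- The stretch factor of the θ₄-graph is at least `7`. -/
theorem theta4_lower_bound (ε : ℝ) (hε : 0 < ε) :
    ∃ P : Finset (ℝ × ℝ), GenPos P ∧
      ∃ u ∈ P, ∃ w ∈ P, u ≠ w ∧
        ∀ (k : ℕ) (v : ℕ → ℝ × ℝ), IsTheta4Path P k v → v 0 = u → v k = w →
          (7 - ε) * dist2 u w ≤ pathLength k v := by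
  set N : ℝ := 100000 + 10000 / ε with hNdef
  have hq : 0 < 10000 / ε := by positivity
  have hN : 100000 ≤ N := by linarith
  have hεN : 8400 ≤ ε * N := by
    have : ε * (10000 / ε) = 10000 := by field_simp
    rw [hNdef]; nlinarith
  refine ⟨ptSet N, ?_, pt N 0, (mem_ptSet N _).2 ⟨0, rfl⟩, pt N 1, (mem_ptSet N _).2 ⟨1, rfl⟩,
    ?_, ?_⟩
  · intro p hp q hq hpq
    obtain ⟨a, rfl⟩ := (mem_ptSet N _).1 hp
    obtain ⟨b, rfl⟩ := (mem_ptSet N _).1 hq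
    exact genpos_pt N hN a b (fun h => hpq (by rw [h]))
  · intro h
    exact (genpos_pt N hN 0 1 (by decide)).1 (by rw [h])
  · intro k v hv h0 hk
    have h1 := path_len N hN v 0 h0 k 1 hv hk
    have e0 : pot 0 = 0 := rfl
    have e1 : pot 1 = 7 := rfl
    rw [e0, e1] at h1
    push_cast at h1
    have hd : dist2 (pt N 0) (pt N 1) ≤ N + 800 := by
      rw [dist2]
      apply Real.sqrt_le_iff.2
      refine ⟨by linarith, ?_⟩
      simp [pt, bX, bY, qX, qY]
      nlinarith
    have hd0 : 0 ≤ dist2 (pt N 0) (pt N 1) := Real.sqrt_nonneg _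
    by_cases h7 : 0 ≤ 7 - ε
    · have := mul_le_mul_of_nonneg_left hd h7
      nlinarith
    · have : (7 - ε) * dist2 (pt N 0) (pt N 1) ≤ 0 :=
        mul_nonpos_of_nonpos_of_nonneg (by linarith) hd0
      nlinarith
end
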